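/- Given any b : ℕ → ℝ_{>0}, there exists c : ℕ → ℝ with c(0) = −b(0) and c(1) = 0 such that the function u defined for m ≥ 1, n ≥ 0 by u(m,n) = b(0)·∏_{k=1}^{n} (b(m+k−1)/b(n−k)) + ∑_{ℓ=0}^{n−1} (c(m+ℓ) − c(n−ℓ))·∏_{k=1}^{ℓ} (b(m+k−1)/b(n−k)) (and u(0,n) = 0) satisfies u(m,n) > 0 for all m ≥ 1, n ≥ 0, and the stationary distribution corresponding to u in the homogeneous PALRMP (for any fixed q ≥ 0, q ≠ 1) is factorised with one-point function f(n) = ∏_{i=1}^{n} b(i−1). -/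

import Mathlib

open scoped Classical

namespace LRMP

/-- A rate function: `u m n` is positive when the departure site is occupied
(`m ≥ 1`) and zero when it is empty (`m = 0`). -/
def IsRate (u : ℕ → ℕ → ℝ) : Prop :=
  (∀ m n : ℕ, 1 ≤ m → 0 < u m n) ∧ ∀ n : ℕ, u 0 n = 0

/-- The configuration `η^{k,ℓ}`: one particle moved from site `k` to site `ℓ`. -/
def move (L : ℕ) (η : ZMod L → ℕ) (k ℓ : ZMod L) : ZMod L → ℕ :=
  fun a => if a = k then η a - 1 else if a = ℓ then η a + 1 else η a

/-- Every site strictly between `k` and `ℓ`, moving clockwise from `k`, is empty in `η`. -/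
def RightClear (L : ℕ) (η : ZMod L → ℕ) (k ℓ : ZMod L) : Prop :=
  ∀ i : ℕ, 0 < i → i < (ℓ - k).val → η (k + (i : ZMod L)) = 0

/-- Every site strictly between `k` and `ℓ`, moving counterclockwise from `k`, is empty in `η`. -/
def LeftClear (L : ℕ) (η : ZMod L → ℕ) (k ℓ : ZMod L) : Prop :=
  ∀ i : ℕ, 0 < i → i < (k - ℓ).val → η (k - (i : ZMod L)) = 0

/-- The total rate of the transition `η → η^{k,ℓ}` in the PALRMP with rate function `u`,
rate parameters `x` and asymmetry parameter `q`: a clockwise (right) hop contributes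
`x ℓ * u (η k) (η ℓ)` and a counterclockwise (left) hop contributes `q * x ℓ * u (η k) (η ℓ)`. -/
noncomputable def hopRate (L : ℕ) (u : ℕ → ℕ → ℝ) (x : ZMod L → ℝ) (q : ℝ)
    (η : ZMod L → ℕ) (k ℓ : ZMod L) : ℝ :=
  (if k ≠ ℓ ∧ 1 ≤ η k ∧ RightClear L η k ℓ then x ℓ * u (η k) (η ℓ) else 0) +
  (if k ≠ ℓ ∧ 1 ≤ η k ∧ LeftClear L η k ℓ then q * (x ℓ * u (η k) (η ℓ)) else 0)

/-- The incoming probability current into `η`: the sum over pairs `(k, ℓ)` of the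
probability current due to the transition into `η` in which a particle moves from
site `k` to site `ℓ` (coming from the configuration `η^{ℓ,k} = move L η ℓ k`). -/
noncomputable def inflow (L : ℕ) [NeZero L] (u : ℕ → ℕ → ℝ) (x : ZMod L → ℝ) (q : ℝ)
    (π : (ZMod L → ℕ) → ℝ) (η : ZMod L → ℕ) : ℝ :=
  ∑ k : ZMod L, ∑ ℓ : ZMod L,
    if 1 ≤ η ℓ then π (move L η ℓ k) * hopRate L u x q (move L η ℓ k) k ℓ else 0

/-- The outgoing probability current out of `η`. -/
noncomputable def outflow (L : ℕ) [NeZero L] (u : ℕ → ℕ → ℝ) (x : ZMod L → ℝ) (q : ℝ)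
    (π : (ZMod L → ℕ) → ℝ) (η : ZMod L → ℕ) : ℝ :=
  ∑ k : ZMod L, ∑ ℓ : ZMod L, π η * hopRate L u x q η k ℓ

/-- `π` satisfies the master (balance) equation of the PALRMP on `Ω_{L,N}`:
for every configuration `η` with `N` particles, the incoming probability current
equals the outgoing probability current. -/
def IsStationary (L : ℕ) [NeZero L] (N : ℕ) (u : ℕ → ℕ → ℝ) (x : ZMod L → ℝ) (q : ℝ)
    (π : (ZMod L → ℕ) → ℝ) : Prop :=
  ∀ η : ZMod L → ℕ, (∑ a, η a) = N → inflow L u x q π η = outflow L u x q π η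

/-- The stationary distribution corresponding to the rate `u` in the PALRMP with
asymmetry parameter `q` is factorised, with one-point function `f`: for every
`L ≥ 2`, `N ≥ 1` and all positive rate parameters `x`, the factorised distribution
`η ↦ ∏_ℓ f (x ℓ) (η ℓ)` (up to normalisation) is stationary. -/
def FactorisedPALRMP (u : ℕ → ℕ → ℝ) (q : ℝ) (f : ℝ → ℕ → ℝ) : Prop :=
  (∀ (x : ℝ) (n : ℕ), 0 < x → 0 < f x n) ∧
  ∀ (L N : ℕ) [NeZero L], 2 ≤ L → 1 ≤ N →
    ∀ x : ZMod L → ℝ, (∀ ℓ, 0 < x ℓ) →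
      IsStationary L N u x q (fun η => ∏ ℓ, f (x ℓ) (η ℓ))

/-- The stationary distribution corresponding to the rate `u` in the homogeneous
PALRMP (all rate parameters equal to `1`) with asymmetry parameter `q` is factorised,
with one-point function `f`. -/
def FactorisedHomog (u : ℕ → ℕ → ℝ) (q : ℝ) (f : ℕ → ℝ) : Prop :=
  (∀ n : ℕ, 0 < f n) ∧
  ∀ (L N : ℕ) [NeZero L], 2 ≤ L → 1 ≤ N →
    IsStationary L N u (fun _ => (1 : ℝ)) q (fun η => ∏ ℓ, f (η ℓ))

end LRMP

namespace LRMP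

lemma rc_val {L : ℕ} [NeZero L] {k ℓ : ZMod L} {i : ℕ} (h0 : 0 < i) (h : i < (ℓ - k).val) :
    k + (i : ZMod L) ≠ k ∧ k + (i : ZMod L) ≠ ℓ := by
  have hL : i < L := h.trans (ZMod.val_lt _)
  have hv : ((i : ℕ) : ZMod L).val = i := ZMod.val_cast_of_lt hL
  constructor
  · intro e
    have : (i : ZMod L) = 0 := by simpa using e
    rw [this] at hv
    simp at hv
    omega
  · intro e
    have : (i : ZMod L) = ℓ - k := by rw [← e]; ring
    rw [this] at hv
    omega

lemma leftClear_iff (L : ℕ) [NeZero L] (η : ZMod L → ℕ) (k ℓ : ZMod L) :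
    LeftClear L η k ℓ ↔ RightClear L η ℓ k := by
  have key : ∀ i : ℕ, i < (k - ℓ).val →
      k - (((k - ℓ).val - i : ℕ) : ZMod L) = ℓ + (i : ZMod L) := by
    intro i hi
    rw [Nat.cast_sub hi.le, ZMod.natCast_zmod_val]; ring
  have key2 : ∀ i : ℕ, i < (k - ℓ).val →
      ℓ + (((k - ℓ).val - i : ℕ) : ZMod L) = k - (i : ZMod L) := by
    intro i hi
    rw [Nat.cast_sub hi.le, ZMod.natCast_zmod_val]; ring
  constructor
  · intro h i h0 hi
    rw [← key i hi]
    exact h _ (by omega) (by omega)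
  · intro h i h0 hi
    rw [← key2 i hi]
    exact h _ (by omega) (by omega)

lemma rc_move (L : ℕ) [NeZero L] (η : ZMod L → ℕ) (k ℓ a c : ZMod L)
    (h : (a = k ∧ c = ℓ) ∨ (a = ℓ ∧ c = k)) :
    RightClear L (move L η a c) k ℓ ↔ RightClear L η k ℓ := by
  unfold RightClear
  refine forall_congr' fun i => forall_congr' fun h0 => forall_congr' fun hi => ?_
  obtain ⟨h1, h2⟩ := rc_val h0 hi
  rcases h with ⟨rfl, rfl⟩ | ⟨rfl, rfl⟩ <;> simp [move, h1, h2]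

lemma exists_unique_right (L : ℕ) [NeZero L] (η : ZMod L → ℕ) (s : ZMod L) (hs : 1 ≤ η s)
    (k : ZMod L) (hk : η k = 0) : ∃! ℓ, 1 ≤ η ℓ ∧ RightClear L η k ℓ := by
  have hex : ∃ i : ℕ, 1 ≤ η (k + (i : ZMod L)) := ⟨(s - k).val, by simpa using hs⟩
  have hle : Nat.find hex ≤ (s - k).val := Nat.find_min' hex (by simpa using hs)
  have hlt : Nat.find hex < L := hle.trans_lt (ZMod.val_lt _)
  refine ⟨k + (Nat.find hex : ZMod L), ⟨Nat.find_spec hex, ?_⟩, ?_⟩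
  · intro i h0 hi
    rw [add_sub_cancel_left, ZMod.val_cast_of_lt hlt] at hi
    have := Nat.find_min hex hi
    omega
  · rintro ℓ ⟨h1, h2⟩
    have hf : Nat.find hex ≤ (ℓ - k).val := Nat.find_min' hex (by simpa using h1)
    have hpos : 0 < Nat.find hex := by
      rw [Nat.find_pos]; simp [hk]
    rcases hf.lt_or_eq with h | h
    · have := h2 _ hpos h
      have := Nat.find_spec hex
      omega
    · rw [h]; simp

lemma exists_unique_left (L : ℕ) [NeZero L] (η : ZMod L → ℕ) (s : ZMod L) (hs : 1 ≤ η s)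
    (ℓ : ZMod L) (hl : η ℓ = 0) : ∃! k, 1 ≤ η k ∧ RightClear L η k ℓ := by
  obtain ⟨m, ⟨h1, h2⟩, h3⟩ := exists_unique_right L (fun a => η (-a)) (-s) (by simpa using hs)
    (-ℓ) (by simpa using hl)
  have conv : ∀ k, RightClear L η k ℓ ↔ RightClear L (fun a => η (-a)) (-ℓ) (-k) := by
    intro k
    rw [← leftClear_iff]
    unfold LeftClear RightClear
    have e1 : -k - -ℓ = ℓ - k := by ring
    have e2 : ∀ i : ℕ, -(-ℓ + (i : ZMod L)) = ℓ - i := by intro i; ring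
    simp only [e1, e2]
  refine ⟨-m, ⟨h1, ?_⟩, ?_⟩
  · rw [conv]; simpa using h2
  · rintro k ⟨h4, h5⟩
    have := h3 (-k) ⟨by simpa using h4, (conv k).1 h5⟩
    rw [← this]; simp

/-- one-point function -/
noncomputable def ff (b : ℕ → ℝ) (n : ℕ) : ℝ := ∏ i ∈ Finset.range n, b i

/-- the rate -/
noncomputable def uu (b : ℕ → ℝ) (m n : ℕ) : ℝ :=
  if m = 0 then 0 else b 0 * ∏ k ∈ Finset.Icc 1 n, b (m + k - 1) / b (n - k)

/-- the common current -/
noncomputable def TT (L : ℕ) [NeZero L] (b : ℕ → ℝ) (η : ZMod L → ℕ) (k ℓ : ZMod L) : ℝ :=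
  b 0 * ff b (η k + η ℓ) * ∏ a ∈ Finset.univ \ {k, ℓ}, ff b (η a)

lemma ff_pos (b : ℕ → ℝ) (hb : ∀ n, 0 < b n) (n : ℕ) : 0 < ff b n :=
  Finset.prod_pos fun i _ => hb i

lemma uu_eq (b : ℕ → ℝ) (hb : ∀ n, 0 < b n) (m n : ℕ) (hm : 1 ≤ m) :
    ff b m * ff b n * uu b m n = b 0 * ff b (m + n) := by
  have h1 : ∏ k ∈ Finset.Icc 1 n, b (m + k - 1) / b (n - k)
      = (∏ k ∈ Finset.range n, b (m + k)) / ff b n := by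
    rw [← Finset.Ico_succ_right_eq_Icc, Finset.prod_Ico_eq_prod_range, Finset.prod_div_distrib]
    congr 1
    · refine Finset.prod_congr (by simp) fun i _ => ?_
      congr 1
      omega
    · unfold ff
      rw [← Finset.prod_range_reflect]
      refine Finset.prod_congr (by simp) fun i hi => ?_
      congr 1
      simp only [Nat.succ_eq_succ, Nat.succ_eq_add_one, Finset.mem_range] at hi ⊢
      omega
  have h2 : ff b (m + n) = ff b m * ∏ k ∈ Finset.range n, b (m + k) := by
    unfold ff
    rw [Finset.prod_range_add]
  have := (ff_pos b hb n).ne'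
  rw [uu, if_neg (by omega), h1, h2]
  field_simp

lemma prod_split (L : ℕ) [NeZero L] (g : ZMod L → ℝ) (k ℓ : ZMod L) (h : k ≠ ℓ) :
    ∏ a, g a = g k * g ℓ * ∏ a ∈ Finset.univ \ {k, ℓ}, g a := by
  rw [← Finset.prod_sdiff (Finset.subset_univ ({k, ℓ} : Finset (ZMod L))),
    Finset.prod_pair h, mul_comm]

lemma cur_eq (L : ℕ) [NeZero L] (b : ℕ → ℝ) (hb : ∀ n, 0 < b n) (η : ZMod L → ℕ)
    (k ℓ : ZMod L) (h : k ≠ ℓ) (hk : 1 ≤ η k) :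
    (∏ a, ff b (η a)) * uu b (η k) (η ℓ) = TT L b η k ℓ := by
  rw [prod_split L (fun a => ff b (η a)) k ℓ h, TT, ← uu_eq b hb _ _ hk]
  ring

lemma TT_move (L : ℕ) [NeZero L] (b : ℕ → ℝ) (η : ZMod L → ℕ)
    (k ℓ : ZMod L) (h : k ≠ ℓ) (hl : 1 ≤ η ℓ) :
    TT L b (move L η ℓ k) k ℓ = TT L b η k ℓ := by
  unfold TT
  congr 1
  · congr 2
    simp [move, h]
    omega
  · refine Finset.prod_congr rfl fun a ha => ?_
    simp at ha
    simp [move, ha]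

lemma TT_symm (L : ℕ) [NeZero L] (b : ℕ → ℝ) (η : ZMod L → ℕ) (k ℓ : ZMod L) :
    TT L b η k ℓ = TT L b η ℓ k := by
  unfold TT
  rw [Finset.pair_comm, add_comm]

lemma TT_zero (L : ℕ) [NeZero L] (b : ℕ → ℝ) (η : ZMod L → ℕ) (k ℓ : ZMod L) (h : k ≠ ℓ)
    (hk : η k = 0) : TT L b η k ℓ = b 0 * ∏ a, ff b (η a) := by
  rw [prod_split L (fun a => ff b (η a)) k ℓ h, TT, hk]
  simp [ff]
  ring

lemma sum_unique {α : Type*} [Fintype α] (p : α → Prop) [DecidablePred p] (h : ∃! a, p a) (x : ℝ) :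
    ∑ a, (if p a then x else 0) = x := by
  obtain ⟨a, ha, hu⟩ := h
  rw [Finset.sum_eq_single a]
  · simp [ha]
  · intro c _ hc
    rw [if_neg]
    exact fun hp => hc (hu c hp)
  · simp

lemma in_eq_out (L : ℕ) [NeZero L] (b : ℕ → ℝ) (η : ZMod L → ℕ) (s : ZMod L) (hs : 1 ≤ η s) :
    ∑ k, ∑ ℓ, (if k ≠ ℓ ∧ 1 ≤ η ℓ ∧ RightClear L η k ℓ then TT L b η k ℓ else 0) =
    ∑ k, ∑ ℓ, (if k ≠ ℓ ∧ 1 ≤ η k ∧ RightClear L η k ℓ then TT L b η k ℓ else 0) := by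
  set x := b 0 * ∏ a, ff b (η a) with hx
  have hA : ∀ k ℓ, (if k ≠ ℓ ∧ 1 ≤ η ℓ ∧ RightClear L η k ℓ then TT L b η k ℓ else 0) =
      (if k ≠ ℓ ∧ 1 ≤ η k ∧ 1 ≤ η ℓ ∧ RightClear L η k ℓ then TT L b η k ℓ else 0) +
      (if η k = 0 then (if 1 ≤ η ℓ ∧ RightClear L η k ℓ then x else 0) else 0) := by
    intro k ℓ
    by_cases hk : η k = 0
    · by_cases hl : 1 ≤ η ℓ
      · have hne : k ≠ ℓ := by rintro rfl; omega
        simp [hk, hne, hl, TT_zero L b η k ℓ hne hk, hx]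
      · simp [hk, hl]
    · have : 1 ≤ η k := by omega
      simp [hk, this]
  have hB : ∀ k ℓ, (if k ≠ ℓ ∧ 1 ≤ η k ∧ RightClear L η k ℓ then TT L b η k ℓ else 0) =
      (if k ≠ ℓ ∧ 1 ≤ η k ∧ 1 ≤ η ℓ ∧ RightClear L η k ℓ then TT L b η k ℓ else 0) +
      (if η ℓ = 0 then (if 1 ≤ η k ∧ RightClear L η k ℓ then x else 0) else 0) := by
    intro k ℓ
    by_cases hl : η ℓ = 0
    · by_cases hk : 1 ≤ η k
      · have hne : k ≠ ℓ := by rintro rfl; omega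
        rw [TT_symm]
        simp [hk, hne, hl, TT_zero L b η ℓ k hne.symm hl, hx]
      · simp [hk, hl]
    · have : 1 ≤ η ℓ := by omega
      simp [hl, this]
  simp only [hA, hB, Finset.sum_add_distrib]
  congr 1
  rw [Finset.sum_comm (f := fun k ℓ =>
    if η ℓ = 0 then (if 1 ≤ η k ∧ RightClear L η k ℓ then x else 0) else 0)]
  refine Finset.sum_congr rfl fun k _ => ?_
  by_cases hk : η k = 0
  · simp only [hk, if_true]
    rw [sum_unique _ (exists_unique_right L η s hs k hk),
      sum_unique _ (exists_unique_left L η s hs k hk)]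
  · simp [hk]

lemma stat (L : ℕ) [NeZero L] (N : ℕ) (hN : 1 ≤ N) (b : ℕ → ℝ) (hb : ∀ n, 0 < b n) (q : ℝ) :
    IsStationary L N (uu b) (fun _ => (1 : ℝ)) q (fun η => ∏ ℓ, ff b (η ℓ)) := by
  intro η hη
  obtain ⟨s, hs⟩ : ∃ s, 1 ≤ η s := by
    by_contra hcon
    push Not at hcon
    have : ∑ a, η a = 0 := Finset.sum_eq_zero fun a _ => by have := hcon a; omega
    omega
  have main := in_eq_out L b η s hs
  have hin : inflow L (uu b) (fun _ => (1 : ℝ)) q (fun η => ∏ ℓ, ff b (η ℓ)) η =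
      ∑ k, ∑ ℓ, (if k ≠ ℓ ∧ 1 ≤ η ℓ ∧ RightClear L η k ℓ then TT L b η k ℓ else 0) +
      q * ∑ k, ∑ ℓ, (if k ≠ ℓ ∧ 1 ≤ η k ∧ RightClear L η k ℓ then TT L b η k ℓ else 0) := by
    rw [Finset.sum_comm (f := fun k ℓ =>
      if k ≠ ℓ ∧ 1 ≤ η k ∧ RightClear L η k ℓ then TT L b η k ℓ else 0)]
    simp only [inflow, Finset.mul_sum, ← Finset.sum_add_distrib]
    refine Finset.sum_congr rfl fun k _ => Finset.sum_congr rfl fun ℓ _ => ?_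
    by_cases hne : k = ℓ
    · simp [hopRate, hne]
    by_cases hl : 1 ≤ η ℓ
    · have hk : 1 ≤ move L η ℓ k k := by simp [move, hne]
      have hc := cur_eq L b hb (move L η ℓ k) k ℓ hne hk
      rw [TT_move L b η k ℓ hne hl] at hc
      have hne' : ℓ ≠ k := fun h => hne h.symm
      simp only [hopRate, leftClear_iff, rc_move L η k ℓ ℓ k (Or.inr ⟨rfl, rfl⟩),
        rc_move L η ℓ k ℓ k (Or.inl ⟨rfl, rfl⟩), hk, hl, hne, hne', ne_eq, not_false_eq_true,
        true_and, if_true, one_mul, TT_symm L b η ℓ k, ← hc]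
      split_ifs <;> ring
    · simp [hl]
  have hout : outflow L (uu b) (fun _ => (1 : ℝ)) q (fun η => ∏ ℓ, ff b (η ℓ)) η =
      ∑ k, ∑ ℓ, (if k ≠ ℓ ∧ 1 ≤ η k ∧ RightClear L η k ℓ then TT L b η k ℓ else 0) +
      q * ∑ k, ∑ ℓ, (if k ≠ ℓ ∧ 1 ≤ η ℓ ∧ RightClear L η k ℓ then TT L b η k ℓ else 0) := by
    rw [Finset.sum_comm (f := fun k ℓ =>
      if k ≠ ℓ ∧ 1 ≤ η ℓ ∧ RightClear L η k ℓ then TT L b η k ℓ else 0)]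
    simp only [outflow, Finset.mul_sum, ← Finset.sum_add_distrib]
    refine Finset.sum_congr rfl fun k _ => Finset.sum_congr rfl fun ℓ _ => ?_
    by_cases hne : k = ℓ
    · simp [hopRate, hne]
    by_cases hk : 1 ≤ η k
    · have hc := cur_eq L b hb η k ℓ hne hk
      have hne' : ℓ ≠ k := fun h => hne h.symm
      simp only [hopRate, leftClear_iff, hk, hne, hne', ne_eq, not_false_eq_true,
        true_and, if_true, one_mul, TT_symm L b η ℓ k, ← hc]
      split_ifs <;> ring
    · simp [hk, hopRate]
  rw [hin, hout, main]


/-- given any `b : ℕ → ℝ_{>0}` there is `c : ℕ → ℝ` with `c 0 = -b 0`,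
`c 1 = 0`, such that the rate `u` defined by the displayed formula is positive for
`m ≥ 1` and the stationary distribution corresponding to `u` in the homogeneous PALRMP
(any `q ≥ 0`, `q ≠ 1`) is factorised with one-point function `f n = ∏_{i=1}^{n} b (i-1)`. -/
theorem exists_c_for_arbitrary_b (b : ℕ → ℝ) (hb : ∀ n, 0 < b n) :
    ∃ c : ℕ → ℝ, c 0 = -b 0 ∧ c 1 = 0 ∧
      ∃ u : ℕ → ℕ → ℝ,
        (∀ n : ℕ, u 0 n = 0) ∧
        (∀ m n : ℕ, 1 ≤ m →
          u m n = b 0 * (∏ k ∈ Finset.Icc 1 n, b (m + k - 1) / b (n - k))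
            + ∑ ℓ ∈ Finset.range n,
                (c (m + ℓ) - c (n - ℓ)) * ∏ k ∈ Finset.Icc 1 ℓ, b (m + k - 1) / b (n - k)) ∧
        (∀ m n : ℕ, 1 ≤ m → 0 < u m n) ∧
        ∀ q : ℝ, 0 ≤ q → q ≠ 1 →
          FactorisedHomog u q (fun n => ∏ i ∈ Finset.range n, b i) := by
  refine ⟨fun n => if n = 0 then -b 0 else 0, by simp, by simp, uu b, ?_, ?_, ?_, ?_⟩
  · intro n; simp [uu]
  · intro m n hm
    rw [uu, if_neg (by omega), Finset.sum_eq_zero, add_zero]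
    intro ℓ hℓ
    rw [Finset.mem_range] at hℓ
    have h1 : m + ℓ ≠ 0 := by omega
    have h2 : n - ℓ ≠ 0 := by omega
    simp only [if_neg h1, if_neg h2]
    simp
  · intro m n hm
    rw [uu, if_neg (by omega)]
    exact mul_pos (hb 0) (Finset.prod_pos fun k _ => div_pos (hb _) (hb _))
  · intro q _ _
    exact ⟨ff_pos b hb, fun L N _ _ hN => stat L N hN b hb q⟩

end LRMP
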